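/- Fix integers n ≥ 2 and p ≥ 1, and let A_i ∈ M_p be given for each integer i with −(n−1) ≤ i ≤ n−1. Then the following are equivalent: (i) for every r ≥ 1 and all unitary matrices U_1, …, U_{n−1} ∈ M_r, the matrix I_r ⊗ A_0 + Σ_{i=1}^{n−1} ( U_i ⊗ A_i + U_i^* ⊗ A_{−i} ) is positive semidefinite in M_{rp}; (ii) there exists a positive semidefinite n×n block matrix R = [R_{ij}] ∈ M_{np} with blocks R_{ij} ∈ M_p such that R_{ij} = 0 whenever |i − j| ≥ 2, R_{i,i+1} = A_i and R_{i+1,i} = A_{−i} for all 1 ≤ i ≤ n−1, and Σ_{i=1}^n R_{ii} = A_0. -/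

import Mathlib

open Kronecker ComplexOrder Matrix

/-- The `m × m` block matrix with `p × p` blocks `R i j`, viewed as an element of
`M_{mp}` (indexed by `Fin m × Fin p`). -/
def blockMat {m p : ℕ} (R : Fin m → Fin m → Matrix (Fin p) (Fin p) ℂ) :
    Matrix (Fin m × Fin p) (Fin m × Fin p) ℂ :=
  Matrix.of fun ik jl => R ik.1 jl.1 ik.2 jl.2

/-!
Write `n = m + 1`.

A positive tridiagonal lifting gives positivity under unitaries as follows. Factor `R = Gᴴ * G`, so
that `R i j = (g i)ᴴ * g j` for the block columns `g i` of `G`, and let `W i` be the partial products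
of the given unitaries, so that `(W i)ᴴ * W (i + 1) = U i`. The matrix `S = ∑ i, W i ⊗ₖ g i`
satisfies `Sᴴ * S = ∑ i j, (W i)ᴴ * W j ⊗ₖ R i j`. Since `R` is tridiagonal, only the terms with
`|i - j| ≤ 1` survive, and they add up to the matrix in question (`posSemidef_of_tridiagonal`).

For the converse, a tridiagonal lifting exists as soon as there are `X k`, `Y k` with
`∑ k, ((X k)ᴴ * X k + (Y k)ᴴ * Y k) = A 0` and `(X k)ᴴ * Y k = A (k + 1)`: place the Gram matrix of
the pair `(X k, Y k)` in the rows and columns `k, k + 1` and sum over `k`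
(`exists_blockMat_of_gram`). The pairs `(∑ k, ((X k)ᴴ * X k + (Y k)ᴴ * Y k), ((X k)ᴴ * Y k)_k)` form
a convex cone, and this cone is closed because the parametrization is proper
(`convex_range_gramMap`, `isClosed_range_gramMap`). If the given data lay outside the cone, a
separating functional (`exists_separating`) would supply `B₀` and `B k` such that every
`[[B₀ + B₀ᴴ, B k], [(B k)ᴴ, B₀ + B₀ᴴ]]` is positive semidefinite, hence a Gram matrix of some
`(X k, Y k)`. All these `X k` and `Y k` have the same Gram matrix `B₀ + B₀ᴴ`, so they are unitary
multiples `V k * E` and `W k * E` of a single matrix `E` (`exists_unitary_mul_eq`). The unitaries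
`U k = (V k)ᴴ * W k` then satisfy `Eᴴ * U k * E = B k`, and the quadratic form of the matrix
in the hypothesis at the vector `E` equals twice the real part of the functional at the data, which
is negative: a contradiction (`exists_gram_of_unitary`). The relation `A (-i) = (A i)ᴴ`, needed along
the way, follows from the scalar unitaries `1`, `-1` and `Complex.I` (`hermitian_of_unitary`).
-/

/-! ### Gram matrices and unitaries -/

/-- Matrices with equal Gram matrices differ by a unitary: `X v ↦ Y v` is a well-defined isometry
on the range of `X`, and in finite dimension it extends to the whole space. -/
lemma exists_unitary_mul_eq {q p : ℕ} (X Y : Matrix (Fin q) (Fin p) ℂ)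
    (h : Xᴴ * X = Yᴴ * Y) :
    ∃ U ∈ Matrix.unitaryGroup (Fin q) ℂ, U * X = Y := by
  set f := Matrix.toLpLin 2 2 X with hf
  set g := Matrix.toLpLin 2 2 Y with hg
  have key : ∀ (Z : Matrix (Fin q) (Fin p) ℂ) (v : EuclideanSpace ℂ (Fin p)),
      ((‖Matrix.toLpLin 2 2 Z v‖ : ℂ)) ^ 2 = star v.ofLp ⬝ᵥ ((Zᴴ * Z) *ᵥ v.ofLp) := by
    intro Z v
    refine (inner_self_eq_norm_sq_to_K (𝕜 := ℂ)
      (Matrix.toLpLin 2 2 Z v : EuclideanSpace ℂ (Fin q))).symm.trans ?_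
    rw [EuclideanSpace.inner_eq_star_dotProduct,
      Matrix.ofLp_toLpLin, Matrix.toLin'_apply, ← Matrix.mulVec_mulVec, Matrix.dotProduct_mulVec,
      Matrix.star_mulVec, dotProduct_comm, Matrix.dotProduct_mulVec]
  have hn : ∀ v, ‖f v‖ = ‖g v‖ := by
    intro v
    have h1 := key X v
    rw [h, ← key Y v] at h1
    have h2 : ‖f v‖ ^ 2 = ‖g v‖ ^ 2 := by exact_mod_cast h1
    exact (sq_eq_sq₀ (norm_nonneg _) (norm_nonneg _)).1 h2
  -- The isometry is `g` composed with a linear section `s` of `f`; the choice of section is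
  -- immaterial because `‖f v‖ = ‖g v‖` makes `g` vanish on the kernel of `f`.
  obtain ⟨s, hs⟩ := f.rangeRestrict.exists_rightInverse_of_surjective f.range_rangeRestrict
  have hs' : ∀ x, f (s x) = x := fun x => congrArg Subtype.val (LinearMap.congr_fun hs x)
  let L : LinearMap.range f →ₗᵢ[ℂ] EuclideanSpace ℂ (Fin q) :=
    { g ∘ₗ s with
      norm_map' := fun x => by
        change ‖g (s x)‖ = ‖x‖
        rw [← hn, hs']; rfl }
  have hL : ∀ v, L.extend (f v) = g v := by
    intro v
    have h1 : L.extend (f v) = g (s ⟨f v, v, rfl⟩) := L.extend_apply ⟨f v, v, rfl⟩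
    rw [h1, ← sub_eq_zero, ← norm_eq_zero, ← map_sub, ← hn, map_sub, hs', sub_self, norm_zero]
  refine ⟨(Matrix.toLpLin 2 2).symm L.extend.toLinearMap, ?_, ?_⟩
  · rw [Matrix.mem_unitaryGroup_iff', Matrix.star_eq_conjTranspose]
    apply (Matrix.toLpLin 2 2).injective
    rw [Matrix.toLpLin_mul_same, Matrix.toEuclideanLin_conjTranspose_eq_adjoint,
      LinearEquiv.apply_symm_apply, Matrix.toLpLin_one]
    refine LinearMap.ext fun x => ext_inner_right ℂ fun y => ?_
    rw [LinearMap.comp_apply, LinearMap.adjoint_inner_left]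
    exact L.extend.inner_map_map x y
  · apply (Matrix.toLpLin 2 2).injective
    rw [Matrix.toLpLin_mul_same, LinearEquiv.apply_symm_apply]
    exact LinearMap.ext hL

open MatrixOrder in
/-- A positive semidefinite two-by-two block matrix is the Gram matrix of two matrices with a fixed
number `p + p` of rows. -/
lemma exists_gram_of_posSemidef {p : ℕ} (M : Matrix (Fin p ⊕ Fin p) (Fin p ⊕ Fin p) ℂ)
    (hM : M.PosSemidef) :
    ∃ X Y : Matrix (Fin (p + p)) (Fin p) ℂ,
      M = Matrix.fromBlocks (Xᴴ * X) (Xᴴ * Y) (Yᴴ * X) (Yᴴ * Y) := by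
  obtain ⟨G, hG⟩ := CStarAlgebra.nonneg_iff_eq_star_mul_self.1 hM.nonneg
  set G' := G.submatrix finSumFinEquiv.symm id
  refine ⟨G'.toCols₁, G'.toCols₂, ?_⟩
  rw [← Matrix.fromRows_mul_fromCols, ← Matrix.conjTranspose_fromCols_eq_fromRows_conjTranspose,
    Matrix.fromCols_toCols, hG]
  simp [G', Matrix.star_eq_conjTranspose]

/-- Gram data with `p + p` rows are closed under addition, since a sum of positive semidefinite
matrices can be factored again with the same number of rows. -/
lemma exists_gram_add {p : ℕ} (X Y X' Y' : Matrix (Fin (p + p)) (Fin p) ℂ) :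
    ∃ X'' Y'' : Matrix (Fin (p + p)) (Fin p) ℂ,
      X''ᴴ * X'' = Xᴴ * X + X'ᴴ * X' ∧ X''ᴴ * Y'' = Xᴴ * Y + X'ᴴ * Y' ∧
      Y''ᴴ * Y'' = Yᴴ * Y + Y'ᴴ * Y' := by
  have h := (Matrix.posSemidef_conjTranspose_mul_self (X.fromCols Y)).add
    (Matrix.posSemidef_conjTranspose_mul_self (X'.fromCols Y'))
  obtain ⟨X'', Y'', h''⟩ := exists_gram_of_posSemidef _ h
  simp only [Matrix.conjTranspose_fromCols_eq_fromRows_conjTranspose,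
    Matrix.fromRows_mul_fromCols, Matrix.fromBlocks_add, Matrix.fromBlocks_inj] at h''
  exact ⟨X'', Y'', h''.1.symm, h''.2.1.symm, h''.2.2.2.symm⟩

/-! ### The closed convex cone of Gram data -/

/-- The map `(X k, Y k)_k ↦ (∑ k, ((X k)ᴴ * X k + (Y k)ᴴ * Y k), ((X k)ᴴ * Y k)_k)` on tuples of
pairs of `q × p` matrices. Matrices are encoded as plain functions, so that the sup norm
and topology of the function spaces apply. -/
noncomputable def gramMap (m q p : ℕ)
    (G : Fin m → (Fin q → Fin p → ℂ) × (Fin q → Fin p → ℂ)) :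
    (Fin p → Fin p → ℂ) × (Fin m → Fin p → Fin p → ℂ) :=
  (fun a b => ∑ k, ((∑ s, star ((G k).1 s a) * (G k).1 s b) +
      ∑ s, star ((G k).2 s a) * (G k).2 s b),
    fun k a b => ∑ s, star ((G k).1 s a) * (G k).2 s b)

/-- Coercivity of `gramMap`: each squared entry is bounded by a diagonal entry of the first
component, which is a sum of squared moduli of entries. -/
lemma norm_sq_le_gramMap {m q p : ℕ}
    (G : Fin m → (Fin q → Fin p → ℂ) × (Fin q → Fin p → ℂ)) :
    ‖G‖ ^ 2 ≤ ‖gramMap m q p G‖ := by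
  have hdiag : ∀ a, (gramMap m q p G).1 a a =
      ((∑ k, ((∑ s, ‖(G k).1 s a‖ ^ 2) + ∑ s, ‖(G k).2 s a‖ ^ 2) : ℝ) : ℂ) := by
    intro a
    simp [gramMap, Complex.conj_mul']
  have hb : ∀ a, (∑ k, ((∑ s, ‖(G k).1 s a‖ ^ 2) + ∑ s, ‖(G k).2 s a‖ ^ 2) : ℝ)
      ≤ ‖gramMap m q p G‖ := by
    intro a
    refine (Real.le_norm_self _).trans ?_
    rw [← Complex.norm_real, ← hdiag]
    exact ((norm_le_pi_norm _ a).trans (norm_le_pi_norm _ a)).trans (norm_fst_le _)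
  have hk : ∀ k a, (∑ s, ‖(G k).1 s a‖ ^ 2) + ∑ s, ‖(G k).2 s a‖ ^ 2
      ≤ ‖gramMap m q p G‖ := fun k a =>
    (Finset.single_le_sum (f := fun k => (∑ s, ‖(G k).1 s a‖ ^ 2) + ∑ s, ‖(G k).2 s a‖ ^ 2)
      (fun _ _ => by positivity) (Finset.mem_univ k)).trans (hb a)
  have h1 : ∀ k s a, ‖(G k).1 s a‖ ^ 2 ≤ ‖gramMap m q p G‖ := fun k s a => by
    have := Finset.single_le_sum (f := fun s => ‖(G k).1 s a‖ ^ 2)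
      (fun _ _ => by positivity) (Finset.mem_univ s)
    have h2 : 0 ≤ ∑ s, ‖(G k).2 s a‖ ^ 2 := by positivity
    have := hk k a
    linarith
  have h2 : ∀ k s a, ‖(G k).2 s a‖ ^ 2 ≤ ‖gramMap m q p G‖ := fun k s a => by
    have := Finset.single_le_sum (f := fun s => ‖(G k).2 s a‖ ^ 2)
      (fun _ _ => by positivity) (Finset.mem_univ s)
    have h2 : 0 ≤ ∑ s, ‖(G k).1 s a‖ ^ 2 := by positivity
    have := hk k a
    linarith
  rw [← Real.le_sqrt (norm_nonneg _) (norm_nonneg _)]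
  have h0 := Real.sqrt_nonneg ‖gramMap m q p G‖
  refine (pi_norm_le_iff_of_nonneg h0).2 fun k => ?_
  refine norm_prod_le_iff.2 ⟨?_, ?_⟩ <;>
    refine (pi_norm_le_iff_of_nonneg h0).2 fun s =>
      (pi_norm_le_iff_of_nonneg h0).2 fun a => Real.le_sqrt_of_sq_le ?_
  exacts [h1 k s a, h2 k s a]

/-- By coercivity `gramMap` is proper, so its range is closed. -/
lemma isClosed_range_gramMap (m q p : ℕ) : IsClosed (Set.range (gramMap m q p)) := by
  have hp : IsProperMap (gramMap m q p) := by
    refine isProperMap_iff_tendsto_cocompact.2 ⟨by unfold gramMap; fun_prop, ?_⟩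
    rw [← Metric.cobounded_eq_cocompact, ← Metric.cobounded_eq_cocompact,
      ← tendsto_norm_atTop_iff_cobounded]
    exact Filter.tendsto_atTop_mono norm_sq_le_gramMap
      ((Filter.tendsto_pow_atTop two_ne_zero).comp tendsto_norm_cobounded_atTop)
  exact hp.isClosedMap.isClosed_range

lemma gramMap_smul {m q p : ℕ} (t : ℝ)
    (G : Fin m → (Fin q → Fin p → ℂ) × (Fin q → Fin p → ℂ)) :
    gramMap m q p (t • G) = (t ^ 2) • gramMap m q p G := by
  have h : ∀ z w : ℂ, star (t • z) * (t • w) = (t ^ 2) • (star z * w) := by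
    intro z w
    simp; ring
  refine Prod.ext ?_ ?_
  · funext a b
    simp only [gramMap, Pi.smul_apply, Prod.smul_fst, Prod.smul_snd, h, Finset.smul_sum, smul_add]
  · funext k a b
    simp only [gramMap, Pi.smul_apply, Prod.smul_fst, Prod.smul_snd, h, Finset.smul_sum]

lemma exists_gramMap_add {m p : ℕ}
    (G G' : Fin m → (Fin (p + p) → Fin p → ℂ) × (Fin (p + p) → Fin p → ℂ)) :
    ∃ G'', gramMap m (p + p) p G'' = gramMap m (p + p) p G + gramMap m (p + p) p G' := by
  choose X Y hX hXY hY using fun k =>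
    exists_gram_add (Matrix.of (G k).1) (Matrix.of (G k).2) (Matrix.of (G' k).1)
      (Matrix.of (G' k).2)
  refine ⟨fun k => (X k, Y k), Prod.ext ?_ ?_⟩
  · funext a b
    have h1 := fun k => congrFun (congrFun (hX k) a) b
    have h2 := fun k => congrFun (congrFun (hY k) a) b
    change ∑ k, (((X k)ᴴ * X k) a b + ((Y k)ᴴ * Y k) a b) = _
    refine (Finset.sum_congr rfl fun k _ => congrArg₂ (· + ·) (h1 k) (h2 k)).trans ?_
    simp only [gramMap, Prod.fst_add, Pi.add_apply, Matrix.mul_apply,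
      Matrix.conjTranspose_apply, Matrix.add_apply, Matrix.of_apply, Finset.sum_add_distrib]
    ring
  · funext k a b
    exact congrFun (congrFun (hXY k) a) b

lemma convex_range_gramMap (m p : ℕ) : Convex ℝ (Set.range (gramMap m (p + p) p)) := by
  rintro _ ⟨G, rfl⟩ _ ⟨G', rfl⟩ a b ha hb -
  rw [← Real.sq_sqrt ha, ← Real.sq_sqrt hb, ← gramMap_smul, ← gramMap_smul]
  exact exists_gramMap_add _ _

/-! ### Separation from the cone -/

/-- Expansion of a matrix in the standard matrix units. -/
lemma sum_single_pi {p : ℕ} (Z : Fin p → Fin p → ℂ) :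
    Z = ∑ a, ∑ b, Z a b • Pi.single a (Pi.single b (1 : ℂ)) := by
  funext i j
  simp [Finset.sum_apply, Pi.single_apply, apply_ite, ite_apply]

/-- Linear functionals on Gram data are given by entrywise pairing with matrices `B₀`, `B k`. -/
lemma dual_repr {m p : ℕ}
    (φ : ((Fin p → Fin p → ℂ) × (Fin m → Fin p → Fin p → ℂ)) →ₗ[ℂ] ℂ) :
    ∃ (B₀ : Matrix (Fin p) (Fin p) ℂ) (B : Fin m → Matrix (Fin p) (Fin p) ℂ), ∀ Z,
      φ Z = (∑ a, ∑ b, Z.1 a b * B₀ a b) + ∑ k, ∑ a, ∑ b, Z.2 k a b * B k a b := by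
  refine ⟨fun a b => φ (Pi.single a (Pi.single b 1), 0),
    fun k a b => φ (0, Pi.single k (Pi.single a (Pi.single b 1))), fun Z => ?_⟩
  have h0 : ∀ Y, φ (Y, 0) = ∑ a, ∑ b, Y a b * φ (Pi.single a (Pi.single b 1), 0) := by
    intro Y
    have := congrArg (φ ∘ₗ LinearMap.inl ℂ _ _) (sum_single_pi Y)
    simp only [map_sum, map_smul, smul_eq_mul] at this
    exact this
  have h1 : ∀ k Y, φ (0, Pi.single k Y) =
      ∑ a, ∑ b, Y a b * φ (0, Pi.single k (Pi.single a (Pi.single b 1))) := by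
    intro k Y
    have := congrArg (φ ∘ₗ LinearMap.inr ℂ _ _ ∘ₗ
      LinearMap.single ℂ (fun _ : Fin m => Fin p → Fin p → ℂ) k) (sum_single_pi Y)
    simp only [map_sum, map_smul, smul_eq_mul] at this
    exact this
  have h2 : Z = (Z.1, 0) + LinearMap.inr ℂ (Fin p → Fin p → ℂ) _ (∑ k, Pi.single k (Z.2 k)) := by
    rw [Finset.univ_sum_single]
    ext <;> simp
  conv_lhs => rw [h2]
  rw [map_add, h0, map_sum, map_sum]
  congr 1
  exact Finset.sum_congr rfl fun k _ => h1 k (Z.2 k)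

/-- If `(A₀, A)` is not of Gram type, Hahn–Banach gives matrices `B₀`, `B k` whose pairing has
nonnegative real part on all Gram data and negative real part at `(A₀, A)`. Nonnegativity is recorded
only on the data coming from a single index `k` and matrices with one nonzero row,
`x` in `X k` and `y` in `Y k`. -/
lemma exists_separating {m p : ℕ} (hp : 1 ≤ p) (A₀ : Matrix (Fin p) (Fin p) ℂ)
    (A : Fin m → Matrix (Fin p) (Fin p) ℂ)
    (h : ¬ ∃ X Y : Fin m → Matrix (Fin (p + p)) (Fin p) ℂ,
      (∑ k, ((X k)ᴴ * X k + (Y k)ᴴ * Y k) = A₀) ∧ ∀ k, (X k)ᴴ * Y k = A k) :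
    ∃ (B₀ : Matrix (Fin p) (Fin p) ℂ) (B : Fin m → Matrix (Fin p) (Fin p) ℂ),
      (∀ k (x y : Fin p → ℂ), 0 ≤ ((∑ a, ∑ b, (star (x a) * x b + star (y a) * y b) * B₀ a b) +
        ∑ a, ∑ b, star (x a) * y b * B k a b).re) ∧
      ((∑ a, ∑ b, A₀ a b * B₀ a b) + ∑ k, ∑ a, ∑ b, A k a b * B k a b).re < 0 := by
  have hmem : ((A₀, A) : (Fin p → Fin p → ℂ) × (Fin m → Fin p → Fin p → ℂ)) ∉
      Set.range (gramMap m (p + p) p) := by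
    rintro ⟨G, hG⟩
    refine h ⟨fun k => (G k).1, fun k => (G k).2, ?_, fun k => ?_⟩
    · ext a b
      rw [Matrix.sum_apply]
      exact congrFun (congrFun (congrArg Prod.fst hG) a) b
    · ext a b
      exact congrFun (congrFun (congrFun (congrArg Prod.snd hG) k) a) b
  obtain ⟨φ, u, hu, hφ⟩ := RCLike.geometric_hahn_banach_point_closed (𝕜 := ℂ)
    (convex_range_gramMap m p) (isClosed_range_gramMap m (p + p) p) hmem
  have hu0 : u < 0 := by
    have := hφ _ ⟨(0 : ℝ) • 0, rfl⟩
    rw [gramMap_smul] at this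
    simpa using this
  -- A functional bounded below on a cone is nonnegative there: if its real part took a value
  -- `c < 0`, scaling `G` by `√(u / c)` would produce the excluded value `u` itself.
  have hnn : ∀ G, 0 ≤ (φ (gramMap m (p + p) p G)).re := by
    intro G
    by_contra! hneg
    set c := (φ (gramMap m (p + p) p G)).re with hc
    have := hφ _ ⟨(√(u / c)) • G, rfl⟩
    rw [gramMap_smul, Real.sq_sqrt (div_nonneg_of_nonpos hu0.le hneg.le)] at this
    have h2 : φ ((u / c) • gramMap m (p + p) p G) = (u / c) • φ (gramMap m (p + p) p G) :=
      map_smul (φ.restrictScalars ℝ) _ _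
    rw [h2, RCLike.re_to_complex, Complex.smul_re, ← hc, smul_eq_mul, div_mul_cancel₀ _ hneg.ne]
      at this
    exact this.false
  obtain ⟨B₀, B, hB⟩ := dual_repr φ.toLinearMap
  have hB' : ∀ Z, φ Z = _ := hB
  refine ⟨B₀, B, fun k x y => ?_, ?_⟩
  · let s₀ : Fin (p + p) := ⟨0, by omega⟩
    have := hnn (Pi.single k (Pi.single s₀ x, Pi.single s₀ y))
    rw [hB'] at this
    convert this using 3
    · refine Finset.sum_congr rfl fun a _ => Finset.sum_congr rfl fun b _ => ?_
      congr 1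
      simp only [gramMap]
      rw [Finset.sum_eq_single k, Finset.sum_eq_single s₀, Finset.sum_eq_single s₀] <;>
        simp +contextual
    · rw [Finset.sum_eq_single k]
      · refine Finset.sum_congr rfl fun a _ => Finset.sum_congr rfl fun b _ => ?_
        congr 1
        simp only [gramMap]
        rw [Finset.sum_eq_single s₀] <;> simp +contextual
      · intro j _ hj
        simp [gramMap, hj]
      · simp
  · have := hu.trans hu0
    rw [hB'] at this
    exact this

/-! ### From positivity under unitaries to Gram data -/

lemma star_sesq {p : ℕ} (B : Matrix (Fin p) (Fin p) ℂ) (x y : Fin p → ℂ) :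
    star (star x ⬝ᵥ (B *ᵥ y)) = star y ⬝ᵥ (Bᴴ *ᵥ x) := by
  rw [← Matrix.star_dotProduct, Matrix.star_mulVec, Matrix.dotProduct_mulVec]

lemma nonneg_add_star {z : ℂ} (hz : 0 ≤ z.re) : 0 ≤ z + star z := by
  rw [Complex.star_def, Complex.add_conj]
  exact_mod_cast mul_nonneg zero_le_two hz

/-- The form in the hypothesis has only its real part controlled; adding the conjugate turns it
into the quadratic form of the displayed block matrix. -/
lemma posSemidef_fromBlocks_of_re_nonneg {p : ℕ} (B₀ B : Matrix (Fin p) (Fin p) ℂ)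
    (h : ∀ x y : Fin p → ℂ,
      0 ≤ ((∑ a, ∑ b, (star (x a) * x b + star (y a) * y b) * B₀ a b) +
        ∑ a, ∑ b, star (x a) * y b * B a b).re) :
    (Matrix.fromBlocks (B₀ + B₀ᴴ) B Bᴴ (B₀ + B₀ᴴ)).PosSemidef := by
  have hH : (B₀ + B₀ᴴ).IsHermitian := Matrix.isHermitian_add_transpose_self B₀
  refine .of_dotProduct_mulVec_nonneg (hH.fromBlocks rfl hH) fun v => ?_
  have hs : ∀ (C : Matrix (Fin p) (Fin p) ℂ) (x y : Fin p → ℂ),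
      ∑ a, ∑ b, star (x a) * y b * C a b = star x ⬝ᵥ (C *ᵥ y) := by
    intro C x y
    simp only [dotProduct, Matrix.mulVec, Finset.mul_sum, Pi.star_apply]
    exact Finset.sum_congr rfl fun a _ => Finset.sum_congr rfl fun b _ => by ring
  set x : Fin p → ℂ := v ∘ Sum.inl with hx
  set y : Fin p → ℂ := v ∘ Sum.inr with hy
  have hv : v = Sum.elim x y := by simp [hx, hy]
  have h1 := nonneg_add_star (h x y)
  simp only [add_mul, Finset.sum_add_distrib, hs, star_add, star_sesq] at h1
  have h2 : star (Sum.elim x y) = Sum.elim (star x) (star y) := by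
    funext i; cases i <;> rfl
  rw [hv, Matrix.fromBlocks_mulVec, h2, Sum.elim_comp_inl, Sum.elim_comp_inr,
    sumElim_dotProduct_sumElim]
  refine h1.trans_eq ?_
  simp only [Matrix.add_mulVec, dotProduct_add]
  ring

/-- The quadratic form of `U ⊗ₖ A` at the matrix `E`, read as a vector, is the entrywise pairing of
`A` with the compression `Eᴴ * U * E`. -/
lemma kronecker_quad {q p : ℕ} (U : Matrix (Fin q) (Fin q) ℂ) (A : Matrix (Fin p) (Fin p) ℂ)
    (E : Matrix (Fin q) (Fin p) ℂ) :
    star (fun i : Fin q × Fin p => E i.1 i.2) ⬝ᵥ ((U ⊗ₖ A) *ᵥ fun i => E i.1 i.2) =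
      ∑ a, ∑ b, A a b * (Eᴴ * (U * E)) a b := by
  simp only [dotProduct, Matrix.mulVec, Finset.mul_sum, Pi.star_apply, Fintype.sum_prod_type,
    Matrix.mul_apply, Matrix.kroneckerMap_apply, Matrix.conjTranspose_apply]
  rw [Finset.sum_comm]
  refine Finset.sum_congr rfl fun a _ => ?_
  rw [Finset.sum_comm_cycle]
  refine Finset.sum_congr rfl fun b _ => Finset.sum_congr rfl fun s _ =>
    Finset.sum_congr rfl fun t _ => ?_
  ring

lemma star_pairing {p : ℕ} (A B : Matrix (Fin p) (Fin p) ℂ) :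
    star (∑ a, ∑ b, A a b * B a b) = ∑ a, ∑ b, Aᴴ a b * Bᴴ a b := by
  rw [Finset.sum_comm]
  simp [star_sum]

/-- Positivity under scalar unitaries already forces the self-adjointness relations
`A₀ᴴ = A₀` and `(A k)ᴴ = A' k`. -/
lemma hermitian_of_unitary {m p : ℕ} (A₀ : Matrix (Fin p) (Fin p) ℂ)
    (A A' : Fin m → Matrix (Fin p) (Fin p) ℂ)
    (h : ∀ U : Fin m → Matrix (Fin 1) (Fin 1) ℂ, (∀ k, U k ∈ Matrix.unitaryGroup (Fin 1) ℂ) →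
      ((1 : Matrix (Fin 1) (Fin 1) ℂ) ⊗ₖ A₀ +
        ∑ k, (U k ⊗ₖ A k + (U k)ᴴ ⊗ₖ A' k)).PosSemidef) :
    A₀ᴴ = A₀ ∧ ∀ k, (A k)ᴴ = A' k := by
  have hS : ∀ z : Fin m → ℂ, (∀ k, star (z k) * z k = 1) →
      (A₀ + ∑ k, (z k • A k + star (z k) • A' k)).IsHermitian := by
    intro z hz
    have h1 := (h (fun k => z k • 1) fun k => by
      rw [Matrix.mem_unitaryGroup_iff']
      rw [star_smul, star_one, smul_mul_smul_comm, hz, mul_one, one_smul]).isHermitian.submatrix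
        (fun a : Fin p => ((0 : Fin 1), a))
    convert h1 using 1
    ext a b
    simp [Matrix.sum_apply, Matrix.conjTranspose_smul]
  have hk : ∀ k, (A k)ᴴ = A' k := by
    intro k
    -- Change only the `k`-th scalar from `1` to `w` and subtract.
    have hd : ∀ w : ℂ, star w * w = 1 →
        (((w - 1) • A k + (star w - 1) • A' k)).IsHermitian := by
      intro w hw
      have h1 := (hS (Function.update 1 k w) fun j => by
        by_cases hj : j = k
        · subst hj; simpa using hw
        · simp [hj]).sub (hS 1 fun j => by simp)
      convert h1 using 1
      rw [← Finset.add_sum_erase _ _ (Finset.mem_univ k),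
        ← Finset.add_sum_erase _ _ (Finset.mem_univ k),
        Finset.sum_congr (s₁ := Finset.univ.erase k) (g := fun j => (1 : Fin m → ℂ) j • A j +
          star ((1 : Fin m → ℂ) j) • A' j) rfl fun j hj => by
            rw [Function.update_of_ne (Finset.ne_of_mem_erase hj)]]
      simp only [Function.update_self, Pi.one_apply, star_one, one_smul, sub_smul]
      abel
    -- `w = -1` shows that `A k + A' k` is Hermitian; together with `w = I` it follows that
    -- `A k - A' k` is skew-Hermitian.
    have h1 := hd (-1) (by simp)
    have h2 := hd Complex.I (by simp)
    ext a b
    have e1 := congrFun (congrFun h1 a) b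
    have e2 := congrFun (congrFun h2 a) b
    simp only [Matrix.conjTranspose_apply, Matrix.add_apply, Matrix.smul_apply, smul_eq_mul,
      star_add, star_mul', star_sub, star_one, star_neg, Complex.star_def,
      Complex.conj_I] at e1 e2 ⊢
    have hI := Complex.I_mul_I
    linear_combination (-1/4 - Complex.I / 4) * e1 + (Complex.I / 2) * e2 +
      (starRingEnd ℂ (A k b a) - starRingEnd ℂ (A' k b a) + A k a b - A' k a b) / 2 * hI
  refine ⟨?_, hk⟩
  have h1 := hS 1 fun j => by simp
  have h2 : (∑ k, ((1 : Fin m → ℂ) k • A k + star ((1 : Fin m → ℂ) k) • A' k)).IsHermitian := by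
    simp [Matrix.IsHermitian, Matrix.conjTranspose_sum, ← hk, add_comm]
  exact (by simpa using h1.sub h2 : A₀.IsHermitian)

/-- Positivity under all unitary tuples puts `(A₀, A)` in the cone of Gram data. Only unitaries of
size `1` and `p + p` are used. -/
lemma exists_gram_of_unitary {m p : ℕ} (hm : 1 ≤ m) (hp : 1 ≤ p) (A₀ : Matrix (Fin p) (Fin p) ℂ)
    (A A' : Fin m → Matrix (Fin p) (Fin p) ℂ)
    (h : ∀ r : ℕ, 1 ≤ r → ∀ U : Fin m → Matrix (Fin r) (Fin r) ℂ,
      (∀ k, U k ∈ Matrix.unitaryGroup (Fin r) ℂ) →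
      ((1 : Matrix (Fin r) (Fin r) ℂ) ⊗ₖ A₀ +
        ∑ k, (U k ⊗ₖ A k + (U k)ᴴ ⊗ₖ A' k)).PosSemidef) :
    ∃ X Y : Fin m → Matrix (Fin (p + p)) (Fin p) ℂ,
      (∑ k, ((X k)ᴴ * X k + (Y k)ᴴ * Y k) = A₀) ∧ ∀ k, (X k)ᴴ * Y k = A k := by
  obtain ⟨hA₀, hA⟩ := hermitian_of_unitary A₀ A A' (h 1 le_rfl)
  by_contra hne
  obtain ⟨B₀, B, hB, hneg⟩ := exists_separating hp A₀ A hne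
  choose X Y hXY using fun k =>
    exists_gram_of_posSemidef _ (posSemidef_fromBlocks_of_re_nonneg B₀ (B k) (hB k))
  simp only [Matrix.fromBlocks_inj] at hXY
  -- All `X k` and `Y k` share the Gram matrix `B₀ + B₀ᴴ`, so any one of them serves as the common
  -- reference `E`.
  set E := X ⟨0, hm⟩ with hE
  choose V hV hVX using fun k => exists_unitary_mul_eq E (X k)
    ((hXY ⟨0, hm⟩).1.symm.trans (hXY k).1)
  choose W hW hWY using fun k => exists_unitary_mul_eq E (Y k)
    ((hXY ⟨0, hm⟩).1.symm.trans (hXY k).2.2.2)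
  have hE0 : Eᴴ * ((1 : Matrix (Fin (p + p)) (Fin (p + p)) ℂ) * E) = B₀ + B₀ᴴ := by
    rw [Matrix.one_mul]
    exact (hXY _).1.symm
  have hEU : ∀ k, Eᴴ * ((star (V k) * W k) * E) = B k := by
    intro k
    rw [(hXY k).2.1, ← hVX, ← hWY, Matrix.conjTranspose_mul, Matrix.star_eq_conjTranspose]
    simp only [Matrix.mul_assoc]
  have hEU' : ∀ k, Eᴴ * ((star (V k) * W k)ᴴ * E) = (B k)ᴴ := by
    intro k
    rw [← hEU k]
    simp only [Matrix.conjTranspose_mul, Matrix.conjTranspose_conjTranspose, Matrix.mul_assoc]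
  have hpos := (h (p + p) (by omega) (fun k => star (V k) * W k) fun k =>
    mul_mem (Unitary.star_mem (hV k)) (hW k)).dotProduct_mulVec_nonneg
      (fun i : Fin (p + p) × Fin p => E i.1 i.2)
  simp only [Matrix.add_mulVec, Matrix.sum_mulVec, dotProduct_add, dotProduct_sum,
    kronecker_quad, hE0, hEU, hEU'] at hpos
  -- The value at `E` is `T + star T`, where `T` is the separating functional at `(A₀, A)`.
  set T := (∑ a, ∑ b, A₀ a b * B₀ a b) + ∑ k, ∑ a, ∑ b, A k a b * B k a b with hT
  have hTT : T + star T = (∑ a, ∑ b, A₀ a b * (B₀ + B₀ᴴ) a b) +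
      ∑ k, ((∑ a, ∑ b, A k a b * B k a b) + ∑ a, ∑ b, A' k a b * (B k)ᴴ a b) := by
    have hs : star (∑ k, ∑ a, ∑ b, A k a b * B k a b) =
        ∑ k, ∑ a, ∑ b, A' k a b * (B k)ᴴ a b := by
      rw [star_sum]
      simp only [star_pairing, hA]
    rw [hT, star_add, hs, star_pairing, hA₀, Finset.sum_add_distrib]
    simp only [Matrix.add_apply, mul_add, Finset.sum_add_distrib]
    ring
  rw [← hTT, Complex.star_def, Complex.add_conj] at hpos
  have : 0 ≤ 2 * T.re := by exact_mod_cast hpos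
  linarith

/-! ### Tridiagonal block matrices -/

/-- A double sum with tridiagonal support splits into the diagonal and the two off-diagonals. -/
lemma sum_tridiagonal {M : Type*} [AddCommMonoid M] (m : ℕ)
    (f : Fin (m + 1) → Fin (m + 1) → M)
    (hf : ∀ i j : Fin (m + 1), ((i : ℕ) + 2 ≤ j ∨ (j : ℕ) + 2 ≤ i) → f i j = 0) :
    ∑ i, ∑ j, f i j =
      ∑ i, f i i + ∑ k : Fin m, (f k.castSucc k.succ + f k.succ k.castSucc) := by
  induction m with
  | zero => simp
  | succ m ih =>
    have h1 : ∑ i : Fin (m + 1), f i.castSucc (Fin.last (m + 1)) =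
        f (Fin.last m).castSucc (Fin.last (m + 1)) := by
      refine Finset.sum_eq_single _ (fun i _ hi => hf _ _ (Or.inl ?_)) (by simp)
      have : (i : ℕ) ≠ m := fun h => hi (Fin.ext h)
      have := i.2
      simp; omega
    have h2 : ∑ i : Fin (m + 1), f (Fin.last (m + 1)) i.castSucc =
        f (Fin.last (m + 1)) (Fin.last m).castSucc := by
      refine Finset.sum_eq_single _ (fun i _ hi => hf _ _ (Or.inr ?_)) (by simp)
      have : (i : ℕ) ≠ m := fun h => hi (Fin.ext h)
      have := i.2
      simp; omega
    rw [Fin.sum_univ_castSucc]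
    simp only [Fin.sum_univ_castSucc (n := m + 1), Finset.sum_add_distrib]
    rw [h1, h2, ih (fun i j => f i.castSucc j.castSucc) fun i j hij => hf _ _ (by simpa using hij)]
    rw [Fin.sum_univ_castSucc (n := m) (f := fun k => f k.castSucc k.succ),
      Fin.sum_univ_castSucc (n := m) (f := fun k => f k.succ k.castSucc)]
    simp only [Finset.sum_add_distrib, Fin.succ_last, Fin.succ_castSucc]
    abel

open MatrixOrder in
/-- A positive semidefinite tridiagonal block matrix stays positive when its diagonal is collapsed
and its `k`-th superdiagonal block is tensored with a unitary `U k`. -/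
lemma posSemidef_of_tridiagonal {m p r : ℕ}
    (R : Fin (m + 1) → Fin (m + 1) → Matrix (Fin p) (Fin p) ℂ)
    (hR : (blockMat R).PosSemidef)
    (hR0 : ∀ i j : Fin (m + 1), ((i : ℕ) + 2 ≤ (j : ℕ) ∨ (j : ℕ) + 2 ≤ (i : ℕ)) → R i j = 0)
    (U : Fin m → Matrix (Fin r) (Fin r) ℂ) (hU : ∀ k, U k ∈ Matrix.unitaryGroup (Fin r) ℂ) :
    ((1 : Matrix (Fin r) (Fin r) ℂ) ⊗ₖ (∑ i, R i i) +
      ∑ k : Fin m, (U k ⊗ₖ R k.castSucc k.succ + (U k)ᴴ ⊗ₖ R k.succ k.castSucc)).PosSemidef := by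
  obtain ⟨G, hG⟩ := CStarAlgebra.nonneg_iff_eq_star_mul_self.1 hR.nonneg
  let g : Fin (m + 1) → Matrix (Fin (m + 1) × Fin p) (Fin p) ℂ := fun i => G.submatrix id (i, ·)
  have hg : ∀ i j, (g i)ᴴ * g j = R i j := by
    intro i j
    ext a b
    exact (congrFun (congrFun hG (i, a)) (j, b)).symm
  let u : Fin m → Matrix.unitaryGroup (Fin r) ℂ := fun k => ⟨U k, hU k⟩
  -- `W i` is the product of the first `i` of the unitaries.
  let W : Fin (m + 1) → Matrix (Fin r) (Fin r) ℂ := fun i => (Fin.partialProd u i : _)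
  have hW1 : ∀ i, (W i)ᴴ * W i = 1 := fun i =>
    Matrix.mem_unitaryGroup_iff'.1 (Fin.partialProd u i).2
  have hWU : ∀ k : Fin m, (W k.castSucc)ᴴ * W k.succ = U k := fun k =>
    congrArg Subtype.val (Fin.partialProd_right_inv u k)
  have hWU' : ∀ k : Fin m, (W k.succ)ᴴ * W k.castSucc = (U k)ᴴ := by
    intro k
    rw [← hWU, Matrix.conjTranspose_mul, Matrix.conjTranspose_conjTranspose]
  have h := Matrix.posSemidef_conjTranspose_mul_self (∑ i, W i ⊗ₖ g i)
  rw [Matrix.conjTranspose_sum, Matrix.sum_mul] at h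
  simp only [Matrix.mul_sum, Matrix.conjTranspose_kronecker, ← Matrix.mul_kronecker_mul, hg] at h
  rw [sum_tridiagonal m _ fun i j hij => by rw [hR0 i j hij, Matrix.kronecker_zero]] at h
  simp only [hW1, hWU, hWU'] at h
  convert h using 2
  exact map_sum (Matrix.kroneckerBilinear (R := ℂ) (α := ℂ) (1 : Matrix (Fin r) (Fin r) ℂ)) _ _

/-- Gram data produce a tridiagonal lifting: the Gram matrix of `(X k, Y k)` is placed in block rows
and columns `k, k + 1`, and these are summed over `k`. -/
lemma exists_blockMat_of_gram {m p : ℕ} (X Y : Fin m → Matrix (Fin (p + p)) (Fin p) ℂ) :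
    ∃ R : Fin (m + 1) → Fin (m + 1) → Matrix (Fin p) (Fin p) ℂ,
      (blockMat R).PosSemidef ∧
      (∀ i j : Fin (m + 1), ((i : ℕ) + 2 ≤ (j : ℕ) ∨ (j : ℕ) + 2 ≤ (i : ℕ)) → R i j = 0) ∧
      (∀ k : Fin m, R k.castSucc k.succ = (X k)ᴴ * Y k) ∧
      (∀ k : Fin m, R k.succ k.castSucc = (Y k)ᴴ * X k) ∧
      (∑ i, R i i) = ∑ k, ((X k)ᴴ * X k + (Y k)ᴴ * Y k) := by
  -- `Z k` is the block row with `X k` at position `k`, `Y k` at position `k + 1` and zeros elsewhere.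
  let Z : Fin m → Fin (m + 1) → Matrix (Fin (p + p)) (Fin p) ℂ := fun k i =>
    if i = k.castSucc then X k else if i = k.succ then Y k else 0
  have hZ1 : ∀ k, Z k k.castSucc = X k := fun k => by simp [Z]
  have hZ2 : ∀ k, Z k k.succ = Y k := fun k => by
    simp [Z, (Fin.castSucc_lt_succ (i := k)).ne']
  have hZ0 : ∀ (k : Fin m) (i : Fin (m + 1)), (i : ℕ) ≠ k → (i : ℕ) ≠ k + 1 → Z k i = 0 :=
      fun k i h1 h2 => by
    simp only [Z]
    rw [if_neg fun h => h1 (by simp [h]), if_neg fun h => h2 (by simp [h])]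
  refine ⟨fun i j => ∑ k, (Z k i)ᴴ * Z k j, ?_, ?_, ?_, ?_, ?_⟩
  · have h : blockMat (fun i j => ∑ k, (Z k i)ᴴ * Z k j) =
        ∑ k, (Matrix.of fun s (ia : Fin (m + 1) × Fin p) => Z k ia.1 s ia.2)ᴴ *
          (Matrix.of fun s (ia : Fin (m + 1) × Fin p) => Z k ia.1 s ia.2) := by
      ext ⟨i, a⟩ ⟨j, b⟩
      simp [blockMat, Matrix.sum_apply, Matrix.mul_apply]
    rw [h]
    exact Matrix.posSemidef_sum _ fun k _ => Matrix.posSemidef_conjTranspose_mul_self _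
  · intro i j hij
    refine Finset.sum_eq_zero fun k _ => ?_
    by_cases hi : (i : ℕ) = k ∨ (i : ℕ) = k + 1
    · rw [hZ0 k j (by omega) (by omega), Matrix.mul_zero]
    · rw [hZ0 k i (by omega) (by omega), Matrix.conjTranspose_zero, Matrix.zero_mul]
  · intro k
    have h : ∀ l, l ≠ k → (Z l k.castSucc)ᴴ * Z l k.succ = 0 := by
      intro l hl
      have hl' : (l : ℕ) ≠ k := fun h => hl (Fin.ext h)
      by_cases hlk : (k : ℕ) = l + 1
      · rw [hZ0 l k.succ (by simp; omega) (by simp; omega), Matrix.mul_zero]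
      · rw [hZ0 l k.castSucc (by simp; omega) (by simp; omega), Matrix.conjTranspose_zero,
          Matrix.zero_mul]
    exact (Finset.sum_eq_single k (fun l _ hl => h l hl) (by simp)).trans (by rw [hZ1, hZ2])
  · intro k
    have h : ∀ l, l ≠ k → (Z l k.succ)ᴴ * Z l k.castSucc = 0 := by
      intro l hl
      have hl' : (l : ℕ) ≠ k := fun h => hl (Fin.ext h)
      by_cases hlk : (k : ℕ) = l + 1
      · rw [hZ0 l k.succ (by simp; omega) (by simp; omega), Matrix.conjTranspose_zero,
          Matrix.zero_mul]
      · rw [hZ0 l k.castSucc (by simp; omega) (by simp; omega), Matrix.mul_zero]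
    exact (Finset.sum_eq_single k (fun l _ hl => h l hl) (by simp)).trans (by rw [hZ1, hZ2])
  · rw [Finset.sum_comm]
    refine Finset.sum_congr rfl fun k _ => ?_
    rw [← Finset.sum_subset (Finset.subset_univ {k.castSucc, k.succ}),
      Finset.sum_pair (Fin.castSucc_lt_succ (i := k)).ne, hZ1, hZ2]
    intro i _ hi
    simp only [Finset.mem_insert, Finset.mem_singleton, not_or, Fin.ext_iff, Fin.val_castSucc,
      Fin.val_succ] at hi
    rw [hZ0 k i hi.1 hi.2, Matrix.mul_zero]

/-- Positivity in the quotient `T_n/J_n` of the tridiagonal matrices: for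
`A_i ∈ M_p` (`−(n−1) ≤ i ≤ n−1`), the element `∑ u_i ⊗ A_i` is positive under all
unitary matrix tuples iff there is a positive tridiagonal block lifting. -/
theorem positivity_in_Tn_mod_Jn (n p : ℕ) (hn : 2 ≤ n) (hp : 1 ≤ p)
    (A : ℤ → Matrix (Fin p) (Fin p) ℂ) :
    (∀ r : ℕ, 1 ≤ r → ∀ U : Fin (n - 1) → Matrix (Fin r) (Fin r) ℂ,
      (∀ k, U k ∈ Matrix.unitaryGroup (Fin r) ℂ) →
      ((1 : Matrix (Fin r) (Fin r) ℂ) ⊗ₖ A 0 +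
        ∑ k : Fin (n - 1),
          (U k ⊗ₖ A (((k : ℕ) : ℤ) + 1) + (U k)ᴴ ⊗ₖ A (-(((k : ℕ) : ℤ) + 1)))).PosSemidef)
    ↔
    (∃ R : Fin n → Fin n → Matrix (Fin p) (Fin p) ℂ,
      (blockMat R).PosSemidef ∧
      (∀ i j : Fin n, ((i : ℕ) + 2 ≤ (j : ℕ) ∨ (j : ℕ) + 2 ≤ (i : ℕ)) → R i j = 0) ∧
      (∀ i j : Fin n, (j : ℕ) = (i : ℕ) + 1 → R i j = A (((i : ℕ) : ℤ) + 1)) ∧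
      (∀ i j : Fin n, (i : ℕ) = (j : ℕ) + 1 → R i j = A (-(((j : ℕ) : ℤ) + 1))) ∧
      (∑ i, R i i) = A 0) := by
  obtain ⟨m, rfl⟩ : ∃ m, n = m + 1 := ⟨n - 1, by omega⟩
  constructor
  · intro h
    have hAH := (hermitian_of_unitary (A 0) (fun k : Fin m => A (((k : ℕ) : ℤ) + 1))
      (fun k : Fin m => A (-(((k : ℕ) : ℤ) + 1))) (h 1 le_rfl)).2
    obtain ⟨X, Y, h0, hXY⟩ := exists_gram_of_unitary (m := m) (by omega) hp (A 0) _ _ h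
    obtain ⟨R, hR, hR0, hR1, hR2, hRd⟩ := exists_blockMat_of_gram X Y
    refine ⟨R, hR, hR0, fun i j hij => ?_, fun i j hij => ?_, hRd.trans h0⟩
    · obtain ⟨k, rfl, rfl⟩ : ∃ k : Fin m, i = k.castSucc ∧ j = k.succ :=
        ⟨⟨i, by omega⟩, rfl, Fin.ext hij⟩
      rw [hR1, hXY, Fin.val_castSucc]
    · obtain ⟨k, rfl, rfl⟩ : ∃ k : Fin m, j = k.castSucc ∧ i = k.succ :=
        ⟨⟨j, by omega⟩, rfl, Fin.ext hij⟩
      rw [hR2, Fin.val_castSucc, ← hAH k, ← hXY k, Matrix.conjTranspose_mul,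
        Matrix.conjTranspose_conjTranspose]
  · rintro ⟨R, hR, hR0, hR1, hR2, hRd⟩ r - U hU
    have h := posSemidef_of_tridiagonal R hR hR0 U hU
    rw [hRd] at h
    convert h using 6 with k
    · exact (hR1 k.castSucc k.succ rfl).symm
    · exact (hR2 k.succ k.castSucc rfl).symm
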